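/- arXiv:1808.02706 — 6 statements merged into one kernel-verified Lean document; each statement's English description precedes it below -/
import Mathlib

section
/- Let n ≥ 1, σ ≥ 1 and δ ∈ (0, σ/2). Then there exist constants ε ∈ (0,1), c > 0 and C > 0 such that for all ξ ∈ ℝⁿ with 0 < |ξ| ≤ ε and all t > 0: |K̂₁(t,ξ)| ≤ C t e^{−c|ξ|^{2(σ−δ)}t} and |K̂₀(t,ξ)| ≤ C e^{−c|ξ|^{2(σ−δ)}t}. -/
open MeasureTheory Real Complex
open scoped ENNReal NNReal

noncomputable section

variable {n : ℕ}

/-- First characteristic root `λ₁(ξ) = (−|ξ|^{2δ} + √(|ξ|^{4δ} − 4|ξ|^{2σ}))/2`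
(principal complex square root). -/
def lam1 (σ δ : ℝ) (ξ : EuclideanSpace ℝ (Fin n)) : ℂ :=
  (-((‖ξ‖ ^ (2 * δ) : ℝ) : ℂ) +
      (((‖ξ‖ ^ (4 * δ) - 4 * ‖ξ‖ ^ (2 * σ) : ℝ) : ℂ) ^ ((1 : ℂ) / 2))) / 2

/-- Second characteristic root `λ₂(ξ) = (−|ξ|^{2δ} − √(|ξ|^{4δ} − 4|ξ|^{2σ}))/2`. -/
def lam2 (σ δ : ℝ) (ξ : EuclideanSpace ℝ (Fin n)) : ℂ :=
  (-((‖ξ‖ ^ (2 * δ) : ℝ) : ℂ) -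
      (((‖ξ‖ ^ (4 * δ) - 4 * ‖ξ‖ ^ (2 * σ) : ℝ) : ℂ) ^ ((1 : ℂ) / 2))) / 2

/-- Fourier multiplier `K̂₀(t,ξ) = (λ₁ e^{λ₂ t} − λ₂ e^{λ₁ t})/(λ₁ − λ₂)`. -/
def K0hat (σ δ : ℝ) (t : ℝ) (ξ : EuclideanSpace ℝ (Fin n)) : ℂ :=
  (lam1 σ δ ξ * Complex.exp (lam2 σ δ ξ * (t : ℂ)) -
      lam2 σ δ ξ * Complex.exp (lam1 σ δ ξ * (t : ℂ))) / (lam1 σ δ ξ - lam2 σ δ ξ)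

/-- Fourier multiplier `K̂₁(t,ξ) = (e^{λ₁ t} − e^{λ₂ t})/(λ₁ − λ₂)`. -/
def K1hat (σ δ : ℝ) (t : ℝ) (ξ : EuclideanSpace ℝ (Fin n)) : ℂ :=
  (Complex.exp (lam1 σ δ ξ * (t : ℂ)) - Complex.exp (lam2 σ δ ξ * (t : ℂ))) /
    (lam1 σ δ ξ - lam2 σ δ ξ)

/-- A cut-off: a smooth, compactly supported, radial function with `0 ≤ χ ≤ 1`
and `χ(ξ) = 1` for `|ξ| ≤ 1`. -/
def IsCutoff (χ : EuclideanSpace ℝ (Fin n) → ℝ) : Prop :=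
  ContDiff ℝ (⊤ : ℕ∞) χ ∧ HasCompactSupport χ ∧ (∀ ξ, χ ξ ∈ Set.Icc (0 : ℝ) 1) ∧
    (∀ ξ, ‖ξ‖ ≤ 1 → χ ξ = 1) ∧ ∀ ξ η, ‖ξ‖ = ‖η‖ → χ ξ = χ η

lemma core_bound (a g s t : ℝ) (ha : 0 < a) (hg : 0 < g) (hs0 : 0 < s) (hs : s ^ 2 = a ^ 2 - 4 * (a * g))
    (h8 : 8 * g ≤ a) (ht : 0 < t) :
    |(Real.exp ((-a + s) / 2 * t) - Real.exp ((-a - s) / 2 * t)) / ((-a + s) / 2 - (-a - s) / 2)|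
      ≤ 4 * t * Real.exp (-1 * g * t) ∧
    |((-a + s) / 2 * Real.exp ((-a - s) / 2 * t) - (-a - s) / 2 * Real.exp ((-a + s) / 2 * t)) /
      ((-a + s) / 2 - (-a - s) / 2)| ≤ 4 * Real.exp (-1 * g * t) := by
  have hsa : s ≤ a := by nlinarith [mul_pos ha hg]
  have hs2 : a / 2 ≤ s := by nlinarith [mul_le_mul_of_nonneg_left h8 ha.le]
  have h1 : (-a + s) / 2 ≤ -g := by nlinarith [mul_pos ha hg]
  have hd : (-a + s) / 2 - (-a - s) / 2 = s := by ring
  have hE : Real.exp ((-a + s) / 2 * t) ≤ Real.exp (-1 * g * t) := by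
    apply Real.exp_le_exp.2; nlinarith
  have hEp := Real.exp_pos ((-a + s) / 2 * t)
  have hF : Real.exp ((-a - s) / 2 * t) = Real.exp ((-a + s) / 2 * t) * Real.exp (-(s * t)) := by
    rw [← Real.exp_add]; congr 1; ring
  have hlow : 1 - s * t ≤ Real.exp (-(s * t)) := by
    have := Real.add_one_le_exp (-(s * t)); linarith
  have hup : Real.exp (-(s * t)) ≤ 1 := Real.exp_le_one_iff.2 (by nlinarith)
  have hq := Real.exp_pos (-(s * t))
  rw [hd, hF]
  generalize Real.exp ((-a + s) / 2 * t) = E at *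
  generalize Real.exp (-(s * t)) = q at *
  generalize Real.exp (-1 * g * t) = G at *
  constructor
  · rw [abs_div, abs_of_pos hs0, div_le_iff₀ hs0, abs_of_nonneg (by nlinarith)]
    calc E - E * q = E * (1 - q) := by ring
      _ ≤ G * (s * t) := by gcongr <;> nlinarith
      _ ≤ 4 * t * G * s := by nlinarith [mul_pos (hEp.trans_le hE) (mul_pos hs0 ht)]
  · rw [abs_div, abs_of_pos hs0, div_le_iff₀ hs0, abs_le]
    have e1 : (-a + s) / 2 * (E * q) - (-a - s) / 2 * E = E * ((a + s) / 2 - (a - s) / 2 * q) := by ring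
    have e2 : 0 ≤ (a + s) / 2 - (a - s) / 2 * q := by nlinarith
    have e3 : (a + s) / 2 - (a - s) / 2 * q ≤ 4 * s := by nlinarith
    have hG := hEp.trans_le hE
    rw [e1]
    constructor
    · have := mul_nonneg hEp.le e2
      have := mul_pos hG hs0
      linarith
    · calc _ ≤ G * (4 * s) := by gcongr
        _ = _ := by ring

/-- Pointwise bounds on `K̂₀`, `K̂₁` for small frequencies. -/
theorem stmt_12 (n : ℕ) (hn : 1 ≤ n) (σ δ : ℝ) (hσ : 1 ≤ σ) (hδ : δ ∈ Set.Ioo 0 (σ / 2)) :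
    ∃ ε c C : ℝ, ε ∈ Set.Ioo (0 : ℝ) 1 ∧ 0 < c ∧ 0 < C ∧
      ∀ ξ : EuclideanSpace ℝ (Fin n), 0 < ‖ξ‖ → ‖ξ‖ ≤ ε → ∀ t : ℝ, 0 < t →
        ‖K1hat σ δ t ξ‖ ≤ C * t * Real.exp (-c * ‖ξ‖ ^ (2 * (σ - δ)) * t) ∧
        ‖K0hat σ δ t ξ‖ ≤ C * Real.exp (-c * ‖ξ‖ ^ (2 * (σ - δ)) * t) := by
  obtain ⟨hδ0, hδ1⟩ := hδ
  have hp : 0 < 2 * σ - 4 * δ := by linarith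
  refine ⟨(1 / 8 : ℝ) ^ (1 / (2 * σ - 4 * δ)), 1, 4, ⟨by positivity, ?_⟩, one_pos, by norm_num, ?_⟩
  · exact Real.rpow_lt_one (by norm_num) (by norm_num) (by positivity)
  intro ξ h0 hε t ht
  have hr : ‖ξ‖ ^ (2 * σ - 4 * δ) ≤ 1 / 8 := by
    calc _ ≤ ((1 / 8 : ℝ) ^ (1 / (2 * σ - 4 * δ))) ^ (2 * σ - 4 * δ) :=
          Real.rpow_le_rpow h0.le hε hp.le
      _ = 1 / 8 := by
        rw [← Real.rpow_mul (by norm_num), one_div_mul_cancel hp.ne', Real.rpow_one]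
  have ha : 0 < ‖ξ‖ ^ (2 * δ) := by positivity
  have hg : 0 < ‖ξ‖ ^ (2 * (σ - δ)) := by positivity
  have hga : ‖ξ‖ ^ (2 * (σ - δ)) = ‖ξ‖ ^ (2 * δ) * ‖ξ‖ ^ (2 * σ - 4 * δ) := by
    rw [← Real.rpow_add h0]; congr 1; ring
  have h8 : 8 * ‖ξ‖ ^ (2 * (σ - δ)) ≤ ‖ξ‖ ^ (2 * δ) := by rw [hga]; nlinarith
  have hb : ‖ξ‖ ^ (2 * σ) = ‖ξ‖ ^ (2 * δ) * ‖ξ‖ ^ (2 * (σ - δ)) := by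
    rw [← Real.rpow_add h0]; congr 1; ring
  have ha2 : ‖ξ‖ ^ (4 * δ) = (‖ξ‖ ^ (2 * δ)) ^ 2 := by
    rw [pow_two, ← Real.rpow_add h0]; congr 1; ring
  have hD : 0 < ‖ξ‖ ^ (4 * δ) - 4 * ‖ξ‖ ^ (2 * σ) := by
    rw [ha2, hb]; nlinarith [mul_le_mul_of_nonneg_left h8 ha.le]
  obtain ⟨s, hs⟩ : ∃ s, s = √(‖ξ‖ ^ (4 * δ) - 4 * ‖ξ‖ ^ (2 * σ)) := ⟨_, rfl⟩
  have hs0 : 0 < s := hs ▸ Real.sqrt_pos.2 hD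
  have hsq : s ^ 2 = (‖ξ‖ ^ (2 * δ)) ^ 2 - 4 * (‖ξ‖ ^ (2 * δ) * ‖ξ‖ ^ (2 * (σ - δ))) := by
    rw [hs, Real.sq_sqrt hD.le, ha2, hb]
  have hc : (((‖ξ‖ ^ (4 * δ) - 4 * ‖ξ‖ ^ (2 * σ) : ℝ) : ℂ) ^ ((1 : ℂ) / 2)) = (s : ℂ) := by
    rw [hs, Real.sqrt_eq_rpow, Complex.ofReal_cpow hD.le]
    norm_num
  have hl1 : lam1 σ δ ξ = (((-‖ξ‖ ^ (2 * δ) + s) / 2 : ℝ) : ℂ) := by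
    rw [lam1, hc]; push_cast; rfl
  have hl2 : lam2 σ δ ξ = (((-‖ξ‖ ^ (2 * δ) - s) / 2 : ℝ) : ℂ) := by
    rw [lam2, hc]; push_cast; rfl
  have key := core_bound _ _ s t ha hg hs0 hsq h8 ht
  rw [K1hat, K0hat, hl1, hl2]
  constructor
  · have := key.1
    rw [← Real.norm_eq_abs, ← Complex.norm_real] at this
    simpa only [Complex.ofReal_div, Complex.ofReal_sub, Complex.ofReal_mul, Complex.ofReal_exp] using this
  · have := key.2
    rw [← Real.norm_eq_abs, ← Complex.norm_real] at this
    simpa only [Complex.ofReal_div, Complex.ofReal_sub, Complex.ofReal_mul, Complex.ofReal_exp] using this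
end
end

section
/- Let n ≥ 1, σ ≥ 1 and δ ∈ (0, σ/2). Then there exist constants R ≥ 1, c > 0 and C > 0 such that for all ξ ∈ ℝⁿ with |ξ| ≥ R and all t > 0: |K̂₁(t,ξ)| ≤ C t e^{−c|ξ|^{2δ}t} and |K̂₀(t,ξ)| ≤ C e^{−c|ξ|^{2δ}t}. -/
open MeasureTheory Real Complex
open scoped ENNReal NNReal

noncomputable section

variable {n : ℕ}

lemma aux_bounds (a y t : ℝ) (ha : 0 < a) (hy : a ≤ |y|) (ht : 0 < t) (l1 l2 : ℂ)
    (h1 : l1 = (-(a : ℂ) + y * I) / 2) (h2 : l2 = (-(a : ℂ) - y * I) / 2) :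
    ‖(Complex.exp (l1 * t) - Complex.exp (l2 * t)) / (l1 - l2)‖ ≤ t * Real.exp (-(1/2) * a * t) ∧
    ‖(l1 * Complex.exp (l2 * t) - l2 * Complex.exp (l1 * t)) / (l1 - l2)‖
      ≤ 2 * Real.exp (-(1/2) * a * t) := by
  have hy0 : 0 < |y| := lt_of_lt_of_le ha hy
  have hd : l1 - l2 = y * I := by rw [h1, h2]; ring
  have hdn : ‖l1 - l2‖ = |y| := by rw [hd]; simp
  have e1 : ‖Complex.exp (l1 * t)‖ = Real.exp (-(1/2) * a * t) := by
    rw [Complex.norm_exp]; congr 1; rw [h1]; simp; ring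
  have e2 : ‖Complex.exp (l2 * t)‖ = Real.exp (-(1/2) * a * t) := by
    rw [Complex.norm_exp]; congr 1; rw [h2]; simp; ring
  have nyI : ‖(y : ℂ) * I‖ = |y| := by simp
  have na : ‖-(a : ℂ)‖ = a := by simp [abs_of_pos ha]
  have n1 : ‖l1‖ ≤ |y| := by
    have := norm_add_le (-(a : ℂ)) (y * I)
    rw [nyI, na] at this
    rw [h1, norm_div]; simp only [Complex.norm_ofNat]; linarith
  have n2 : ‖l2‖ ≤ |y| := by
    have := norm_sub_le (-(a : ℂ)) (y * I)
    rw [nyI, na] at this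
    rw [h2, norm_div]; simp only [Complex.norm_ofNat]; linarith
  have E := Real.exp_pos (-(1/2) * a * t)
  constructor
  · rw [norm_div, hdn, div_le_iff₀ hy0]
    have : Complex.exp (l1 * t) - Complex.exp (l2 * t)
        = Complex.exp (l2 * t) * (Complex.exp (I * ((y * t : ℝ) : ℂ)) - 1) := by
      rw [mul_sub, ← Complex.exp_add, mul_one]
      congr 2
      rw [h1, h2]; push_cast; ring
    rw [this, norm_mul, e2]
    have h := Real.norm_exp_I_mul_ofReal_sub_one_le (x := y * t)
    rw [Real.norm_eq_abs, abs_mul, abs_of_pos ht] at h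
    nlinarith
  · rw [norm_div, hdn, div_le_iff₀ hy0]
    refine (norm_sub_le _ _).trans ?_
    rw [norm_mul, norm_mul, e1, e2]
    nlinarith

/-- Pointwise bounds on `K̂₀`, `K̂₁` for large frequencies. -/
theorem stmt_13 (n : ℕ) (hn : 1 ≤ n) (σ δ : ℝ) (hσ : 1 ≤ σ) (hδ : δ ∈ Set.Ioo 0 (σ / 2)) :
    ∃ R c C : ℝ, 1 ≤ R ∧ 0 < c ∧ 0 < C ∧
      ∀ ξ : EuclideanSpace ℝ (Fin n), R ≤ ‖ξ‖ → ∀ t : ℝ, 0 < t →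
        ‖K1hat σ δ t ξ‖ ≤ C * t * Real.exp (-c * ‖ξ‖ ^ (2 * δ) * t) ∧
        ‖K0hat σ δ t ξ‖ ≤ C * Real.exp (-c * ‖ξ‖ ^ (2 * δ) * t) := by
  obtain ⟨hδ0, hδ1⟩ := hδ
  refine ⟨1, 1/2, 2, le_rfl, by norm_num, by norm_num, ?_⟩
  intro ξ hξ t ht
  have hr : 0 < ‖ξ‖ := by linarith
  have ha : 0 < ‖ξ‖ ^ (2 * δ) := Real.rpow_pos_of_pos hr _
  have hsq : ‖ξ‖ ^ (4 * δ) = (‖ξ‖ ^ (2 * δ)) ^ 2 := by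
    rw [sq, ← Real.rpow_add hr]; congr 1; ring
  have hle : ‖ξ‖ ^ (4 * δ) ≤ ‖ξ‖ ^ (2 * σ) :=
    Real.rpow_le_rpow_of_exponent_le hξ (by linarith)
  have key : ∃ y : ℝ, ‖ξ‖ ^ (2 * δ) ≤ |y| ∧
      (((‖ξ‖ ^ (4 * δ) - 4 * ‖ξ‖ ^ (2 * σ) : ℝ) : ℂ) ^ ((1 : ℂ) / 2)) = y * I := by
    set D : ℝ := ‖ξ‖ ^ (4 * δ) - 4 * ‖ξ‖ ^ (2 * σ) with hD
    have hDn : D ≤ -(‖ξ‖ ^ (2 * δ)) ^ 2 := by nlinarith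
    set s : ℂ := (D : ℂ) ^ ((1 : ℂ) / 2) with hs
    have hs2 : s ^ 2 = (D : ℂ) := by
      rw [hs, ← Complex.cpow_nat_mul]; norm_num
    have hre := congrArg Complex.re hs2
    have him := congrArg Complex.im hs2
    simp only [sq, Complex.mul_re, Complex.mul_im, Complex.ofReal_re, Complex.ofReal_im] at hre him
    have h0 : s.re = 0 := by
      have : s.re * s.im = 0 := by linarith
      rcases mul_eq_zero.mp this with h | h
      · exact h
      · rw [h] at hre; nlinarith [mul_self_nonneg s.re, pow_pos ha 2]
    refine ⟨s.im, ?_, ?_⟩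
    · rw [← abs_of_pos ha]; apply sq_le_sq.mp
      rw [h0] at hre; nlinarith
    · apply Complex.ext <;> simp [h0]
  obtain ⟨y, hy, hs⟩ := key
  obtain ⟨b1, b0⟩ := aux_bounds _ y t ha hy ht (lam1 σ δ ξ) (lam2 σ δ ξ)
    (by rw [lam1, hs]) (by rw [lam2, hs])
  refine ⟨b1.trans ?_, b0⟩
  have E := Real.exp_pos (-(1/2) * ‖ξ‖ ^ (2 * δ) * t)
  nlinarith [mul_pos ht E]
end
end

section
/- Let σ ≥ 1 and δ ∈ (0, σ/2). Then there exist constants ε ∈ (0,1), c > 0 and C > 0 such that for all ξ ∈ ℝⁿ with 0 < |ξ| ≤ ε: the discriminant |ξ|^{4δ} − 4|ξ|^{2σ} is positive, the characteristic roots λ₁(ξ) and λ₂(ξ) are real, negative and distinct with λ₂(ξ) < λ₁(ξ) < 0, and c|ξ|^{2(σ−δ)} ≤ −λ₁(ξ) ≤ C|ξ|^{2(σ−δ)}, c|ξ|^{2δ} ≤ −λ₂(ξ) ≤ C|ξ|^{2δ}, and c|ξ|^{2δ} ≤ λ₁(ξ) − λ₂(ξ) ≤ C|ξ|^{2δ}.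 -/
open MeasureTheory Real Complex
open scoped ENNReal NNReal

noncomputable section

variable {n : ℕ}

/-- Asymptotic behavior of the characteristic roots for small frequencies:
both roots are real, negative, distinct, with `λ₁ ∼ −|ξ|^{2(σ−δ)}`, `λ₂ ∼ −|ξ|^{2δ}`
and `λ₁ − λ₂ ∼ |ξ|^{2δ}`. -/
theorem stmt_14 (n : ℕ) (σ δ : ℝ) (hσ : 1 ≤ σ) (hδ : δ ∈ Set.Ioo 0 (σ / 2)) :
    ∃ ε c C : ℝ, ε ∈ Set.Ioo (0 : ℝ) 1 ∧ 0 < c ∧ 0 < C ∧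
      ∀ ξ : EuclideanSpace ℝ (Fin n), 0 < ‖ξ‖ → ‖ξ‖ ≤ ε →
        0 < ‖ξ‖ ^ (4 * δ) - 4 * ‖ξ‖ ^ (2 * σ) ∧
        (lam1 σ δ ξ).im = 0 ∧ (lam2 σ δ ξ).im = 0 ∧
        (lam2 σ δ ξ).re < (lam1 σ δ ξ).re ∧ (lam1 σ δ ξ).re < 0 ∧
        c * ‖ξ‖ ^ (2 * (σ - δ)) ≤ -(lam1 σ δ ξ).re ∧
        -(lam1 σ δ ξ).re ≤ C * ‖ξ‖ ^ (2 * (σ - δ)) ∧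
        c * ‖ξ‖ ^ (2 * δ) ≤ -(lam2 σ δ ξ).re ∧
        -(lam2 σ δ ξ).re ≤ C * ‖ξ‖ ^ (2 * δ) ∧
        c * ‖ξ‖ ^ (2 * δ) ≤ (lam1 σ δ ξ).re - (lam2 σ δ ξ).re ∧
        (lam1 σ δ ξ).re - (lam2 σ δ ξ).re ≤ C * ‖ξ‖ ^ (2 * δ) := by
  obtain ⟨hδ0, hδ1⟩ := hδ
  have hp : 0 < 2 * σ - 4 * δ := by linarith
  refine ⟨(3 / 16 : ℝ) ^ (1 / (2 * σ - 4 * δ)), 1 / 2, 2,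
    ⟨by positivity, Real.rpow_lt_one (by norm_num) (by norm_num) (by positivity)⟩,
    by norm_num, by norm_num, ?_⟩
  intro ξ h0 h1
  have hq : ‖ξ‖ ^ (2 * σ - 4 * δ) ≤ 3 / 16 := by
    calc ‖ξ‖ ^ (2 * σ - 4 * δ)
        ≤ ((3 / 16 : ℝ) ^ (1 / (2 * σ - 4 * δ))) ^ (2 * σ - 4 * δ) :=
          Real.rpow_le_rpow h0.le h1 hp.le
      _ = 3 / 16 := by
          rw [← Real.rpow_mul (by norm_num), one_div_mul_cancel hp.ne', Real.rpow_one]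
  have e1 : ‖ξ‖ ^ (4 * δ) = ‖ξ‖ ^ (2 * δ) * ‖ξ‖ ^ (2 * δ) := by
    rw [← Real.rpow_add h0]; congr 1; ring
  have e2 : ‖ξ‖ ^ (2 * σ) = ‖ξ‖ ^ (2 * δ) * ‖ξ‖ ^ (2 * (σ - δ)) := by
    rw [← Real.rpow_add h0]; congr 1; ring
  have e3 : ‖ξ‖ ^ (2 * (σ - δ)) = ‖ξ‖ ^ (2 * δ) * ‖ξ‖ ^ (2 * σ - 4 * δ) := by
    rw [← Real.rpow_add h0]; congr 1; ring
  have ha : 0 < ‖ξ‖ ^ (2 * δ) := Real.rpow_pos_of_pos h0 _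
  have hb : 0 < ‖ξ‖ ^ (2 * (σ - δ)) := Real.rpow_pos_of_pos h0 _
  have hba : ‖ξ‖ ^ (2 * (σ - δ)) ≤ 3 / 16 * ‖ξ‖ ^ (2 * δ) := by
    rw [e3]; nlinarith
  have hD : 0 < ‖ξ‖ ^ (4 * δ) - 4 * ‖ξ‖ ^ (2 * σ) := by
    rw [e1, e2]; nlinarith [mul_pos ha ha]
  have hs : (((‖ξ‖ ^ (4 * δ) - 4 * ‖ξ‖ ^ (2 * σ) : ℝ) : ℂ) ^ ((1 : ℂ) / 2))
      = ((√(‖ξ‖ ^ (4 * δ) - 4 * ‖ξ‖ ^ (2 * σ)) : ℝ) : ℂ) := by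
    rw [Real.sqrt_eq_rpow, Complex.ofReal_cpow hD.le]; norm_num
  have l1 : lam1 σ δ ξ = (((-‖ξ‖ ^ (2 * δ) +
      √(‖ξ‖ ^ (4 * δ) - 4 * ‖ξ‖ ^ (2 * σ))) / 2 : ℝ) : ℂ) := by
    rw [lam1, hs]; push_cast; rfl
  have l2 : lam2 σ δ ξ = (((-‖ξ‖ ^ (2 * δ) -
      √(‖ξ‖ ^ (4 * δ) - 4 * ‖ξ‖ ^ (2 * σ))) / 2 : ℝ) : ℂ) := by
    rw [lam2, hs]; push_cast; rfl
  have hs0 := Real.sqrt_pos.2 hD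
  have hs2 := Real.mul_self_sqrt hD.le
  refine ⟨hD, ?_⟩
  rw [l1, l2]
  simp only [Complex.ofReal_re, Complex.ofReal_im]
  generalize √(‖ξ‖ ^ (4 * δ) - 4 * ‖ξ‖ ^ (2 * σ)) = s at hs0 hs2 ⊢
  rw [e1, e2] at hs2
  generalize ‖ξ‖ ^ (2 * δ) = a at *
  generalize ‖ξ‖ ^ (2 * (σ - δ)) = b at *
  have hsa : s < a := by nlinarith [mul_pos ha hb]
  have hs3 : a / 2 ≤ s := by nlinarith [mul_le_mul_of_nonneg_left hba ha.le]
  have hlow : 2 * b ≤ a - s := by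
    have : a * (2 * b) ≤ a * (a - s) := by nlinarith
    exact le_of_mul_le_mul_left this ha
  have hup : a - s ≤ 4 * b := by
    have : a * (a - s) ≤ a * (4 * b) := by nlinarith
    exact le_of_mul_le_mul_left this ha
  refine ⟨trivial, trivial, ?_, ?_, ?_, ?_, ?_, ?_, ?_, ?_⟩ <;> linarith
end
end

section
/- Let σ ≥ 1 and δ ∈ (0, σ/2), and define f : [1,∞) → ℝ by f(r) = √(1 − (1/4) r^{−2(σ−2δ)}). Then f is smooth, takes values in [√3/2, 1], and for every integer k ≥ 1 there exists a constant C_k > 0 such that for all r ≥ 1: |d^k f / dr^k (r)| ≤ C_k r^{−k} and |d^k (1/f) / dr^k (r)| ≤ C_k r^{−k}. -/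
open Real

noncomputable section

lemma aux_rep (a : ℝ) (G : ℝ → ℝ) (hG : ContDiffOn ℝ (⊤ : ℕ∞) G (Set.Iio 4)) (k : ℕ) :
    ∃ H : ℝ → ℝ, ContDiffOn ℝ (⊤ : ℕ∞) H (Set.Iio 4) ∧
      ∀ r : ℝ, 0 < r → r ^ (-a) < 4 →
        iteratedDeriv k (fun x => G (x ^ (-a))) r = r ^ (-(k : ℝ)) * H (r ^ (-a)) := by
  induction k with
  | zero => exact ⟨G, hG, fun r _ _ => by simp⟩
  | succ k ih =>
    obtain ⟨H, hH, hr⟩ := ih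
    refine ⟨fun u => -(k : ℝ) * H u - a * u * deriv H u, ?_, ?_⟩
    · have hd : ContDiffOn ℝ (⊤ : ℕ∞) (deriv H) (Set.Iio 4) :=
        hH.deriv_of_isOpen isOpen_Iio (by simp)
      exact (contDiffOn_const.mul hH).sub ((contDiffOn_const.mul contDiffOn_id).mul hd)
    · intro r h0 h4
      have hc : ContinuousAt (fun x : ℝ => x ^ (-a)) r :=
        Real.continuousAt_rpow_const _ _ (Or.inl h0.ne')
      have hev : iteratedDeriv k (fun x => G (x ^ (-a))) =ᶠ[nhds r]
          fun x => x ^ (-(k : ℝ)) * H (x ^ (-a)) := by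
        filter_upwards [eventually_gt_nhds h0, hc.eventually_lt_const h4] with x hx hx4
        exact hr x hx hx4
      rw [iteratedDeriv_succ, hev.deriv_eq]
      have hHd : HasDerivAt H (deriv H (r ^ (-a))) (r ^ (-a)) :=
        ((hH.contDiffAt (Iio_mem_nhds h4)).differentiableAt (by simp)).hasDerivAt
      have h1 : HasDerivAt (fun x : ℝ => x ^ (-a)) (-a * r ^ (-a - 1)) r :=
        Real.hasDerivAt_rpow_const (Or.inl h0.ne')
      have h2 : HasDerivAt (fun x : ℝ => x ^ (-(k : ℝ))) (-(k : ℝ) * r ^ (-(k : ℝ) - 1)) r :=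
        Real.hasDerivAt_rpow_const (Or.inl h0.ne')
      have h3 := h2.mul (hHd.comp r h1)
      have h4' : deriv (fun x => x ^ (-(k : ℝ)) * H (x ^ (-a))) r = _ := h3.deriv
      rw [h4']
      have e : (-((k + 1 : ℕ) : ℝ)) = -(k : ℝ) - 1 := by push_cast; ring
      rw [e, Real.rpow_sub_one h0.ne', Real.rpow_sub_one h0.ne']
      simp only [Function.comp]
      ring

lemma aux_bound (a : ℝ) (ha : 0 < a) (G : ℝ → ℝ) (hG : ContDiffOn ℝ (⊤ : ℕ∞) G (Set.Iio 4))
    (k : ℕ) : ∃ C : ℝ, 0 < C ∧ ∀ r : ℝ, 1 ≤ r →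
      |iteratedDeriv k (fun x => G (x ^ (-a))) r| ≤ C * r ^ (-(k : ℝ)) := by
  obtain ⟨H, hH, hr⟩ := aux_rep a G hG k
  obtain ⟨C, hC⟩ := (isCompact_Icc (a := (0 : ℝ)) (b := 1)).exists_bound_of_continuousOn
    (hH.continuousOn.mono (fun x hx => lt_of_le_of_lt hx.2 (by norm_num)))
  refine ⟨max C 1, by positivity, fun r h1 => ?_⟩
  have h0 : 0 < r := by linarith
  have hu : r ^ (-a) ≤ 1 := Real.rpow_le_one_of_one_le_of_nonpos h1 (by linarith)
  have hu0 : 0 ≤ r ^ (-a) := (Real.rpow_pos_of_pos h0 _).le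
  have hk : 0 ≤ r ^ (-(k : ℝ)) := (Real.rpow_pos_of_pos h0 _).le
  rw [hr r h0 (by linarith), abs_mul, abs_of_nonneg hk, mul_comm]
  exact mul_le_mul_of_nonneg_right ((hC _ ⟨hu0, hu⟩).trans (le_max_left _ _)) hk

/-- Properties of the phase-correction factor `f(r) = √(1 − (1/4) r^{−2(σ−2δ)})`:
smoothness on `[1,∞)`, values in `[√3/2, 1]`, and the derivative bounds
`|f^{(k)}(r)| ≤ C_k r^{−k}`, `|(1/f)^{(k)}(r)| ≤ C_k r^{−k}` for `r ≥ 1`. -/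
theorem stmt_16 (σ δ : ℝ) (hσ : 1 ≤ σ) (hδ : δ ∈ Set.Ioo 0 (σ / 2))
    (f : ℝ → ℝ) (hf : ∀ r : ℝ, f r = Real.sqrt (1 - (1 / 4) * r ^ (-(2 * (σ - 2 * δ))))) :
    ContDiffOn ℝ (⊤ : ℕ∞) f (Set.Ici (1 : ℝ)) ∧
    (∀ r : ℝ, 1 ≤ r → f r ∈ Set.Icc (Real.sqrt 3 / 2) 1) ∧
    ∀ k : ℕ, 1 ≤ k → ∃ C : ℝ, 0 < C ∧ ∀ r : ℝ, 1 ≤ r →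
      |iteratedDeriv k f r| ≤ C * r ^ (-(k : ℝ)) ∧
      |iteratedDeriv k (fun x => 1 / f x) r| ≤ C * r ^ (-(k : ℝ)) := by
  have ha : 0 < 2 * (σ - 2 * δ) := by linarith [hδ.2]
  generalize 2 * (σ - 2 * δ) = a at ha hf
  obtain rfl : f = fun r => Real.sqrt (1 - (1 / 4) * r ^ (-a)) := funext hf
  have hpos : ∀ u ∈ Set.Iio (4 : ℝ), 0 < 1 - (1 / 4) * u := fun u hu => by
    have : u < 4 := hu
    linarith
  have hG : ContDiffOn ℝ (⊤ : ℕ∞) (fun u : ℝ => Real.sqrt (1 - (1 / 4) * u)) (Set.Iio 4) :=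
    ContDiffOn.sqrt (by fun_prop) (fun u hu => (hpos u hu).ne')
  have hG' : ContDiffOn ℝ (⊤ : ℕ∞) (fun u : ℝ => 1 / Real.sqrt (1 - (1 / 4) * u))
      (Set.Iio 4) :=
    contDiffOn_const.div hG (fun u hu => (Real.sqrt_pos.2 (hpos u hu)).ne')
  have hu : ∀ r : ℝ, 1 ≤ r → r ^ (-a) ≤ 1 := fun r h1 =>
    Real.rpow_le_one_of_one_le_of_nonpos h1 (by linarith)
  refine ⟨?_, ?_, ?_⟩
  · have hp : ContDiffOn ℝ (⊤ : ℕ∞) (fun r : ℝ => r ^ (-a)) (Set.Ici 1) := fun r hr =>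
      (Real.contDiffAt_rpow_const_of_ne
        (by have : (1 : ℝ) ≤ r := hr
            positivity)).contDiffWithinAt
    exact hG.comp hp (fun r hr => lt_of_le_of_lt (hu r hr) (by norm_num))
  · intro r h1
    have hu0 : 0 ≤ r ^ (-a) := (Real.rpow_pos_of_pos (by linarith) _).le
    have := hu r h1
    constructor
    · apply Real.le_sqrt_of_sq_le
      rw [div_pow, Real.sq_sqrt (by norm_num)]
      linarith
    · apply Real.sqrt_le_one.2
      linarith
  · intro k _
    obtain ⟨C, hC, h⟩ := aux_bound a ha _ hG k
    obtain ⟨C', hC', h'⟩ := aux_bound a ha _ hG' k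
    refine ⟨C + C', by positivity, fun r h1 => ?_⟩
    have hk : 0 ≤ r ^ (-(k : ℝ)) := (Real.rpow_pos_of_pos (by linarith) _).le
    exact ⟨(h r h1).trans (mul_le_mul_of_nonneg_right (by linarith) hk),
      (h' r h1).trans (mul_le_mul_of_nonneg_right (by linarith) hk)⟩
end
end

section
/- Let σ ≥ 1, δ ∈ (0, σ/2) and c₂ ∈ ℝ with c₂ ≠ 0, and define f : [1,∞) → ℝ by f(r) = √(1 − (1/4) r^{−2(σ−2δ)}). Then for every integer k ≥ 0 there exists a constant C_k > 0 such that for all r ≥ 1 and all t ≥ 1: |∂_r^k ( sin(c₂ r^{σ} f(r) t) )| ≤ C_k t^{k} r^{k(σ−1)}. -/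
open Real

noncomputable section

open scoped ContDiff Topology

lemma stmt17_symbol (a : ℝ) (ha : 0 < a) : ∀ (k : ℕ) (s : ℝ) (F : ℝ → ℝ),
    ContDiffOn ℝ ∞ F (Set.Iio 2) → ∃ C : ℝ, 0 ≤ C ∧ ∀ r : ℝ, 1 ≤ r →
      |iteratedDeriv k (fun x => x ^ s * F (x ^ (-a))) r| ≤ C * r ^ (s - k) := by
  intro k
  induction k with
  | zero =>
    intro s F hF
    obtain ⟨C, hC⟩ := (isCompact_Icc (a := (0:ℝ)) (b := 1)).exists_bound_of_continuousOn
      (hF.continuousOn.mono (fun y hy => by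
        simp only [Set.mem_Icc, Set.mem_Iio] at *; linarith [hy.2]))
    refine ⟨C, (norm_nonneg _).trans (hC 0 (by simp)), fun r hr => ?_⟩
    have hr0 : 0 < r := by linarith
    have h1 : r ^ (-a) ≤ 1 := Real.rpow_le_one_of_one_le_of_nonpos hr (by linarith)
    have h0 : 0 ≤ r ^ (-a) := by positivity
    have := hC _ ⟨h0, h1⟩
    rw [Real.norm_eq_abs] at this
    simp only [iteratedDeriv_zero, Nat.cast_zero, sub_zero, abs_mul]
    rw [abs_of_nonneg (by positivity : 0 ≤ r ^ s), mul_comm]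
    gcongr
  | succ k ih =>
    intro s F hF
    have hF' : ContDiffOn ℝ ∞ (deriv F) (Set.Iio 2) :=
      ((contDiffOn_infty_iff_deriv_of_isOpen isOpen_Iio).1 hF).2
    obtain ⟨C, hC0, hC⟩ := ih (s - 1) (fun y => s * F y - a * (y * deriv F y))
      (by fun_prop)
    refine ⟨C, hC0, fun r hr => ?_⟩
    have hr0 : 0 < r := by linarith
    have h1 : r ^ (-a) ≤ 1 := Real.rpow_le_one_of_one_le_of_nonpos hr (by linarith)
    have hcont : ContinuousAt (fun x : ℝ => x ^ (-a)) r :=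
      Real.continuousAt_rpow_const _ _ (Or.inl hr0.ne')
    have hev : deriv (fun x => x ^ s * F (x ^ (-a))) =ᶠ[𝓝 r]
        (fun x => x ^ (s - 1) * (fun y => s * F y - a * (y * deriv F y)) (x ^ (-a))) := by
      filter_upwards [lt_mem_nhds hr0,
        hcont.eventually (gt_mem_nhds (show r ^ (-a) < 2 by linarith))] with x hx hx2
      have hd : HasDerivAt F (deriv F (x ^ (-a))) (x ^ (-a)) :=
        ((hF.differentiableOn (by simp)).differentiableAt (isOpen_Iio.mem_nhds hx2)).hasDerivAt
      have e1 := Real.hasDerivAt_rpow_const (x := x) (p := -a) (Or.inl hx.ne')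
      have e2 := Real.hasDerivAt_rpow_const (x := x) (p := s) (Or.inl hx.ne')
      have e3 := (e2.mul (hd.comp x e1)).deriv
      refine Eq.trans e3 ?_
      simp only [Function.comp]
      rw [Real.rpow_sub_one hx.ne', Real.rpow_sub_one hx.ne']
      field_simp
      ring
    rw [iteratedDeriv_succ', hev.iteratedDeriv_eq k]
    have := hC r hr
    have e : s - ((k + 1 : ℕ) : ℝ) = s - 1 - k := by push_cast; ring
    rw [e]
    exact this

/-- Derivative bounds for the oscillating factor `r ↦ sin(c₂ r^σ f(r) t)`:
for every `k` there is `C_k > 0` with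
`|∂_r^k sin(c₂ r^σ f(r) t)| ≤ C_k t^k r^{k(σ−1)}` for all `r ≥ 1`, `t ≥ 1`. -/
theorem stmt_17 (σ δ c₂ : ℝ) (hσ : 1 ≤ σ) (hδ : δ ∈ Set.Ioo 0 (σ / 2)) (hc₂ : c₂ ≠ 0)
    (f : ℝ → ℝ) (hf : ∀ r : ℝ, f r = Real.sqrt (1 - (1 / 4) * r ^ (-(2 * (σ - 2 * δ))))) :
    ∀ k : ℕ, ∃ C : ℝ, 0 < C ∧ ∀ r t : ℝ, 1 ≤ r → 1 ≤ t →
      |iteratedDeriv k (fun x => Real.sin (c₂ * x ^ σ * f x * t)) r| ≤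
        C * t ^ (k : ℝ) * r ^ ((k : ℝ) * (σ - 1)) := by
  intro k
  obtain ⟨a, ha_def⟩ : ∃ a, a = 2 * (σ - 2 * δ) := ⟨_, rfl⟩
  have ha : 0 < a := by have := hδ.2; linarith
  set F : ℝ → ℝ := fun y => c₂ * Real.sqrt (1 - (1 / 4) * y) with hFdef
  have hF : ContDiffOn ℝ ∞ F (Set.Iio 2) := by
    refine contDiffOn_const.mul (ContDiffOn.sqrt (by fun_prop) ?_)
    intro y hy
    simp only [Set.mem_Iio] at hy
    linarith
  choose C hC0 hC using fun i => stmt17_symbol a ha i σ F hF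
  set g : ℝ → ℝ := fun x => x ^ σ * F (x ^ (-a)) with hg
  set M : ℝ := 1 + ∑ i ∈ Finset.range (k + 1), C i with hM
  have hS : 0 ≤ ∑ i ∈ Finset.range (k + 1), C i := Finset.sum_nonneg fun i _ => hC0 i
  have hM1 : 1 ≤ M := by linarith
  refine ⟨k.factorial * M ^ k, by positivity, fun r t hr ht => ?_⟩
  have hr0 : 0 < r := by linarith
  have ht0 : 0 < t := by linarith
  set V : Set ℝ := Set.Ioi 0 ∩ (fun x : ℝ => x ^ (-a)) ⁻¹' (Set.Iio 2) with hV
  have hVo : IsOpen V := by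
    refine ContinuousOn.isOpen_inter_preimage ?_ isOpen_Ioi isOpen_Iio
    intro x hx
    exact (Real.continuousAt_rpow_const _ _ (Or.inl (ne_of_gt hx))).continuousWithinAt
  have hrV : r ∈ V := by
    refine ⟨hr0, ?_⟩
    have h1 : r ^ (-a) ≤ 1 := Real.rpow_le_one_of_one_le_of_nonpos hr (by linarith)
    simp only [Set.mem_preimage, Set.mem_Iio]; linarith
  have hpow : ∀ p : ℝ, ContDiffOn ℝ ∞ (fun x : ℝ => x ^ p) V := fun p x hx =>
    (Real.contDiffAt_rpow_const_of_ne (ne_of_gt hx.1)).contDiffWithinAt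
  have hgV : ContDiffOn ℝ ∞ g V := (hpow σ).mul (hF.comp (hpow (-a)) (fun x hx => hx.2))
  have heq : (fun x => Real.sin (c₂ * x ^ σ * f x * t)) = Real.sin ∘ (fun x => t * g x) := by
    funext x
    simp only [Function.comp, hg, hFdef, hf, ha_def]
    congr 1; ring
  have key := norm_iteratedFDerivWithin_comp_le (𝕜 := ℝ) (g := Real.sin) (f := fun x => t * g x)
    (n := k) (s := V) (t := Set.univ) (x := r) (N := ∞) Real.contDiff_sin.contDiffOn
    (contDiffOn_const.mul hgV) (by exact_mod_cast le_top) uniqueDiffOn_univ hVo.uniqueDiffOn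
    (fun _ _ => Set.mem_univ _) hrV (C := 1) (D := M * t * r ^ (σ - 1))
    (by
      intro i _
      rw [iteratedFDerivWithin_univ, norm_iteratedFDeriv_eq_norm_iteratedDeriv, Real.norm_eq_abs]
      exact Real.abs_iteratedDeriv_sin_le_one i _)
    (by
      intro i hi hik
      rw [iteratedFDerivWithin_of_isOpen i hVo hrV, norm_iteratedFDeriv_eq_norm_iteratedDeriv,
        Real.norm_eq_abs, iteratedDeriv_const_mul_field, abs_mul, abs_of_pos ht0]
      have hCi : C i ≤ M := by
        have := Finset.single_le_sum (f := C) (fun j _ => hC0 j)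
          (Finset.mem_range.2 (Nat.lt_succ_of_le hik))
        linarith
      have hi0 : i ≠ 0 := by omega
      have hMi : C i ≤ M ^ i := hCi.trans (le_self_pow₀ hM1 hi0)
      have hti : t ≤ t ^ i := le_self_pow₀ ht hi0
      have hri : r ^ (σ - i) ≤ (r ^ (σ - 1)) ^ i := by
        rw [← Real.rpow_natCast, ← Real.rpow_mul hr0.le]
        refine Real.rpow_le_rpow_of_exponent_le hr ?_
        have : (1:ℝ) ≤ i := by exact_mod_cast hi
        nlinarith
      calc t * |iteratedDeriv i g r| ≤ t * (C i * r ^ (σ - i)) := by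
            gcongr; exact hC i r hr
        _ ≤ t ^ i * (M ^ i * (r ^ (σ - 1)) ^ i) := by
            have := mul_nonneg (hC0 i) (Real.rpow_nonneg hr0.le (σ - i))
            gcongr
        _ = _ := by ring)
  rw [iteratedFDerivWithin_of_isOpen k hVo hrV, norm_iteratedFDeriv_eq_norm_iteratedDeriv,
    Real.norm_eq_abs] at key
  rw [heq]
  refine key.trans (le_of_eq ?_)
  rw [Real.rpow_natCast, mul_comm (k:ℝ) (σ - 1), Real.rpow_mul hr0.le, Real.rpow_natCast]
  ring
end
end

section
/- Let n ≥ 1, σ ≥ 1 and δ ∈ (0, σ/2). Let v₀, v₁ : ℝⁿ → ℂ be measurable functions with ∫_{ℝⁿ} (1+|ξ|²)^{σ} |v₀(ξ)|² dξ < ∞ and ∫_{ℝⁿ} |v₁(ξ)|² dξ < ∞, and set v(t,ξ) = K̂₀(t,ξ) v₀(ξ) + K̂₁(t,ξ) v₁(ξ) and w(t,ξ) = −|ξ|^{2σ} K̂₁(t,ξ) v₀(ξ) + (K̂₀(t,ξ) − |ξ|^{2δ} K̂₁(t,ξ)) v₁(ξ). Then for every t > 0 there exists a > 0 such that ∫_{ℝⁿ}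 exp(2a(1+|ξ|²)^{δ}) (1+|ξ|²)^{σ} |v(t,ξ)|² dξ < ∞ and ∫_{ℝⁿ} exp(2a(1+|ξ|²)^{δ}) |w(t,ξ)|² dξ < ∞. (In other words, the solution u(t,·) of the linear equation with data (u₀,u₁) ∈ H^σ × L² belongs to the Gevrey–Sobolev space Γ^{1/(2δ),σ}, and |D|^σ u(t,·), u_t(t,·) belong to Γ^{1/(2δ),0}, for all t > 0.) -/
open MeasureTheory Real Complex
open scoped ENNReal NNReal

noncomputable section

variable {n : ℕ}

lemma aux_exp_sub (z w : ℂ) (hz : z.re ≤ 0) (hw : w.re ≤ 0) :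
    ‖Complex.exp z - Complex.exp w‖ ≤ ‖z - w‖ := by
  have hc : Convex ℝ {z : ℂ | z.re ≤ 0} := convex_halfSpace_re_le 0
  have := hc.norm_image_sub_le_of_norm_hasDerivWithin_le (f := Complex.exp) (f' := Complex.exp)
    (C := 1) (x := w) (y := z) (fun x _ => (Complex.hasDerivAt_exp x).hasDerivWithinAt)
    (fun x hx => by
      rw [Complex.norm_exp]
      exact Real.exp_le_one_iff.mpr hx) hw hz
  simpa using this

lemma aux_sqrt (x : ℝ) : ∃ s : ℂ, (x : ℂ) ^ ((1 : ℂ) / 2) = s ∧ s ^ 2 = x ∧ 0 ≤ s.re := by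
  refine ⟨_, rfl, ?_, ?_⟩
  · have := Complex.cpow_nat_inv_pow (x : ℂ) (n := 2) (by norm_num)
    simpa using this
  · rw [one_div, Complex.cpow_inv_two_re]
    exact Real.sqrt_nonneg _

lemma aux_parts (s : ℂ) (x : ℝ) (h : s ^ 2 = x) :
    s.re * s.im = 0 ∧ s.re ^ 2 - s.im ^ 2 = x ∧ ‖s‖ ^ 2 = |x| := by
  refine ⟨?_, ?_, ?_⟩
  · have := congrArg Complex.im h
    simp [pow_two] at this
    linarith
  · have := congrArg Complex.re h
    simp [pow_two] at this
    nlinarith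
  · rw [← norm_pow, h, Complex.norm_real, Real.norm_eq_abs]

lemma aux_low (p q t : ℝ) (s l1 l2 : ℂ) (hp : 0 ≤ p) (hp1 : p ≤ 1) (hq : 0 ≤ q) (hq1 : q ≤ 1)
    (ht : 0 < t) (hs : s ^ 2 = ((p ^ 2 - 4 * q : ℝ) : ℂ)) (hre : 0 ≤ s.re)
    (h1 : l1 = (-(p : ℂ) + s) / 2) (h2 : l2 = (-(p : ℂ) - s) / 2) :
    ‖(Complex.exp (l1 * t) - Complex.exp (l2 * t)) / (l1 - l2)‖ ≤ t ∧
    ‖(l1 * Complex.exp (l2 * t) - l2 * Complex.exp (l1 * t)) / (l1 - l2)‖ ≤ 1 + 2 * t := by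
  obtain ⟨ha, hb, hn⟩ := aux_parts s _ hs
  have hd : l1 - l2 = s := by rw [h1, h2]; ring
  have hsp : s.re ≤ p := by
    rcases mul_eq_zero.mp ha with h | h
    · linarith
    · rw [h] at hb
      nlinarith
  have hr1 : l1.re ≤ 0 := by
    have : l1.re = (-p + s.re) / 2 := by
      have : l1 = ((1/2 : ℝ) : ℂ) * (-(p : ℂ) + s) := by rw [h1]; push_cast; ring
      rw [this, Complex.re_ofReal_mul]; simp; ring
    linarith
  have hr2 : l2.re ≤ 0 := by
    have : l2.re = (-p - s.re) / 2 := by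
      have : l2 = ((1/2 : ℝ) : ℂ) * (-(p : ℂ) - s) := by rw [h2]; push_cast; ring
      rw [this, Complex.re_ofReal_mul]; simp; ring
    linarith
  have hr1t : (l1 * t).re ≤ 0 := by
    rw [Complex.re_mul_ofReal]; exact mul_nonpos_of_nonpos_of_nonneg hr1 ht.le
  have hr2t : (l2 * t).re ≤ 0 := by
    rw [Complex.re_mul_ofReal]; exact mul_nonpos_of_nonpos_of_nonneg hr2 ht.le
  have hK1 : ‖(Complex.exp (l1 * t) - Complex.exp (l2 * t)) / (l1 - l2)‖ ≤ t := by
    rw [norm_div]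
    apply div_le_of_le_mul₀ (norm_nonneg _) ht.le
    have := aux_exp_sub _ _ hr1t hr2t
    rw [← sub_mul, norm_mul, Complex.norm_real, Real.norm_eq_abs, abs_of_pos ht] at this
    linarith
  refine ⟨hK1, ?_⟩
  by_cases hs0 : s = 0
  · rw [hd, hs0]; simp; linarith
  have hl1 : ‖l1‖ ≤ 2 := by
    have hs3 : ‖s‖ ≤ 3 := by
      have : |p ^ 2 - 4 * q| ≤ 9 := by rw [abs_le]; constructor <;> nlinarith
      nlinarith [norm_nonneg s]
    rw [h1, norm_div]
    have : ‖-(p : ℂ) + s‖ ≤ 1 + 3 := by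
      refine (norm_add_le _ _).trans (add_le_add ?_ hs3)
      rw [norm_neg, Complex.norm_real, Real.norm_eq_abs, abs_of_nonneg hp]; exact hp1
    simp only [Complex.norm_ofNat]
    linarith
  have hK0 : (l1 * Complex.exp (l2 * t) - l2 * Complex.exp (l1 * t)) / (l1 - l2)
      = Complex.exp (l1 * t) - l1 * ((Complex.exp (l1 * t) - Complex.exp (l2 * t)) / (l1 - l2)) := by
    have : l1 - l2 ≠ 0 := by rw [hd]; exact hs0
    field_simp
    ring
  rw [hK0]
  refine (norm_sub_le _ _).trans (add_le_add ?_ ?_)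
  · rw [Complex.norm_exp]; exact Real.exp_le_one_iff.mpr hr1t
  · rw [norm_mul]; exact mul_le_mul hl1 hK1 (norm_nonneg _) (by norm_num)

lemma aux_high (p q t : ℝ) (s l1 l2 : ℂ) (hp : 0 ≤ p) (hpq : p ^ 2 ≤ q) (hq : 1 ≤ q)
    (hs : s ^ 2 = ((p ^ 2 - 4 * q : ℝ) : ℂ))
    (h1 : l1 = (-(p : ℂ) + s) / 2) (h2 : l2 = (-(p : ℂ) - s) / 2) :
    √q * ‖(Complex.exp (l1 * t) - Complex.exp (l2 * t)) / (l1 - l2)‖ ≤ 2 * Real.exp (-(p * t / 2)) ∧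
    ‖(l1 * Complex.exp (l2 * t) - l2 * Complex.exp (l1 * t)) / (l1 - l2)‖
      ≤ 3 * Real.exp (-(p * t / 2)) := by
  obtain ⟨ha, hb, hn⟩ := aux_parts s _ hs
  have hd : l1 - l2 = s := by rw [h1, h2]; ring
  have hsr : s.re = 0 := by
    rcases mul_eq_zero.mp ha with h | h
    · exact h
    · rw [h] at hb
      nlinarith [sq_nonneg s.re]
  have hr1 : l1.re = -p / 2 := by
    have : l1 = ((1/2 : ℝ) : ℂ) * (-(p : ℂ) + s) := by rw [h1]; push_cast; ring
    rw [this, Complex.re_ofReal_mul]; simp [hsr]; ring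
  have hr2 : l2.re = -p / 2 := by
    have : l2 = ((1/2 : ℝ) : ℂ) * (-(p : ℂ) - s) := by rw [h2]; push_cast; ring
    rw [this, Complex.re_ofReal_mul]; simp [hsr]; ring
  have he1 : ‖Complex.exp (l1 * t)‖ = Real.exp (-(p * t / 2)) := by
    rw [Complex.norm_exp, Complex.re_mul_ofReal, hr1]; congr 1; ring
  have he2 : ‖Complex.exp (l2 * t)‖ = Real.exp (-(p * t / 2)) := by
    rw [Complex.norm_exp, Complex.re_mul_ofReal, hr2]; congr 1; ring
  set e := Real.exp (-(p * t / 2)) with he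
  have hepos : 0 < e := Real.exp_pos _
  have hsq : √q ^ 2 = q := Real.sq_sqrt (by linarith)
  have hsq0 : 0 ≤ √q := Real.sqrt_nonneg q
  have hns : ‖s‖ ^ 2 = 4 * q - p ^ 2 := by
    rw [hn, abs_of_nonpos (by linarith)]; ring
  have hsge : √q ≤ ‖s‖ := by
    apply abs_le_of_sq_le_sq' _ (norm_nonneg s) |>.2
    rw [hsq, hns]; linarith
  have hspos : 0 < ‖s‖ := by
    have : (0:ℝ) < √q := Real.sqrt_pos.mpr (by linarith)
    linarith
  have hps : p ≤ ‖s‖ := by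
    apply abs_le_of_sq_le_sq' _ (norm_nonneg s) |>.2
    rw [hns]; linarith
  have hnp : ‖-(p : ℂ)‖ = p := by
    rw [norm_neg, Complex.norm_real, Real.norm_eq_abs, abs_of_nonneg hp]
  have hl1 : ‖l1‖ ≤ ‖s‖ := by
    rw [h1, norm_div, Complex.norm_ofNat]
    have := norm_add_le (-(p : ℂ)) s
    linarith
  have hl2 : ‖l2‖ ≤ ‖s‖ := by
    rw [h2, norm_div, Complex.norm_ofNat]
    have := norm_sub_le (-(p : ℂ)) s
    linarith
  constructor
  · rw [hd, norm_div, ← mul_div_assoc, div_le_iff₀ hspos]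
    have h := norm_sub_le (Complex.exp (l1 * t)) (Complex.exp (l2 * t))
    rw [he1, he2] at h
    calc _ ≤ ‖s‖ * (e + e) := mul_le_mul hsge h (norm_nonneg _) hspos.le
      _ = _ := by ring
  · rw [hd, norm_div, div_le_iff₀ hspos]
    have h := norm_sub_le (l1 * Complex.exp (l2 * t)) (l2 * Complex.exp (l1 * t))
    rw [norm_mul, norm_mul, he1, he2] at h
    nlinarith

lemma aux_bounds_s18 {n : ℕ} (σ δ : ℝ) (hσ : 1 ≤ σ) (hδ0 : 0 < δ) (hδ : δ < σ / 2) (t : ℝ)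
    (ht : 0 < t) : ∃ a : ℝ, 0 < a ∧ ∃ C : ℝ, 0 ≤ C ∧ ∀ ξ : EuclideanSpace ℝ (Fin n),
      Real.exp (2 * a * (1 + ‖ξ‖ ^ 2) ^ δ) * ‖K0hat σ δ t ξ‖ ^ 2 ≤ C ∧
      Real.exp (2 * a * (1 + ‖ξ‖ ^ 2) ^ δ) * ((1 + ‖ξ‖ ^ 2) ^ σ * ‖K1hat σ δ t ξ‖ ^ 2) ≤ C ∧
      Real.exp (2 * a * (1 + ‖ξ‖ ^ 2) ^ δ) *
        ‖K0hat σ δ t ξ - ((‖ξ‖ ^ (2 * δ) : ℝ) : ℂ) * K1hat σ δ t ξ‖ ^ 2 ≤ C := by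
  have h2δ : (0:ℝ) < 2 ^ δ := by positivity
  have h2σ : (1:ℝ) ≤ 2 ^ σ := Real.one_le_rpow (by norm_num) (by linarith)
  refine ⟨t / (2 * 2 ^ δ), by positivity, Real.exp t * 2 ^ σ * (1 + 3 * t) ^ 2 + 2 ^ σ * 25,
    by positivity, fun ξ => ?_⟩
  set r := ‖ξ‖ with hr
  have hr0 : 0 ≤ r := norm_nonneg ξ
  set p := r ^ (2 * δ) with hp
  set q := r ^ (2 * σ) with hq
  have hp0 : 0 ≤ p := by positivity
  have hq0 : 0 ≤ q := by positivity
  have hp2 : r ^ (4 * δ) = p ^ 2 := by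
    rw [hp, ← Real.rpow_mul_natCast hr0]; congr 1; push_cast; ring
  obtain ⟨s, hs, hs2, hre⟩ := aux_sqrt (p ^ 2 - 4 * q)
  have hl1 : lam1 σ δ ξ = (-(p : ℂ) + s) / 2 := by
    rw [← hs, ← hp2]; rfl
  have hl2 : lam2 σ δ ξ = (-(p : ℂ) - s) / 2 := by
    rw [← hs, ← hp2]; rfl
  have hJ : 0 ≤ 1 + r ^ 2 := by positivity
  have hK3 : ‖K0hat σ δ t ξ - (p : ℂ) * K1hat σ δ t ξ‖
      ≤ ‖K0hat σ δ t ξ‖ + p * ‖K1hat σ δ t ξ‖ := by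
    refine (norm_sub_le _ _).trans ?_
    rw [norm_mul, Complex.norm_real, Real.norm_eq_abs, abs_of_nonneg hp0]
  rcases le_total r 1 with h1 | h1
  · have hp1 : p ≤ 1 := Real.rpow_le_one hr0 h1 (by linarith)
    have hq1 : q ≤ 1 := Real.rpow_le_one hr0 h1 (by linarith)
    obtain ⟨b1, b0⟩ := aux_low p q t s _ _ hp0 hp1 hq0 hq1 ht hs2 hre hl1 hl2
    change ‖K1hat σ δ t ξ‖ ≤ _ at b1
    change ‖K0hat σ δ t ξ‖ ≤ _ at b0
    have hJ2 : 1 + r ^ 2 ≤ 2 := by nlinarith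
    have hJδ : (1 + r ^ 2) ^ δ ≤ 2 ^ δ := Real.rpow_le_rpow hJ hJ2 hδ0.le
    have hJσ : (1 + r ^ 2) ^ σ ≤ 2 ^ σ := Real.rpow_le_rpow hJ hJ2 (by linarith)
    have hE : Real.exp (2 * (t / (2 * 2 ^ δ)) * (1 + r ^ 2) ^ δ) ≤ Real.exp t := by
      apply Real.exp_le_exp.mpr
      calc _ ≤ 2 * (t / (2 * 2 ^ δ)) * 2 ^ δ := by gcongr
        _ = t := by field_simp
    have key : ∀ x y : ℝ, 0 ≤ x → x ≤ 1 + 3 * t → 0 ≤ y → y ≤ 2 ^ σ →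
        Real.exp (2 * (t / (2 * 2 ^ δ)) * (1 + r ^ 2) ^ δ) * (y * x ^ 2) ≤
        Real.exp t * 2 ^ σ * (1 + 3 * t) ^ 2 + 2 ^ σ * 25 := by
      intro x y hx hx' hy hy'
      calc _ ≤ Real.exp t * (2 ^ σ * (1 + 3 * t) ^ 2) := by gcongr
        _ ≤ _ := by rw [mul_assoc]; linarith
    refine ⟨?_, ?_, ?_⟩
    · simpa using key _ 1 (norm_nonneg _) (by linarith) zero_le_one h2σ
    · exact key _ _ (norm_nonneg _) (by linarith) (by positivity) hJσ
    · simpa using key _ 1 (norm_nonneg _) (hK3.trans (by nlinarith [norm_nonneg (K1hat σ δ t ξ)]))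
        zero_le_one h2σ
  · have hpq : p ^ 2 ≤ q := by
      rw [← hp2]; exact Real.rpow_le_rpow_of_exponent_le h1 (by linarith)
    have hq1 : 1 ≤ q := Real.one_le_rpow h1 (by linarith)
    obtain ⟨b1, b0⟩ := aux_high p q t s _ _ hp0 hpq hq1 hs2 hl1 hl2
    change √q * ‖K1hat σ δ t ξ‖ ≤ _ at b1
    change ‖K0hat σ δ t ξ‖ ≤ _ at b0
    have hpsq : p ≤ √q := Real.le_sqrt_of_sq_le hpq
    have hJ2 : 1 + r ^ 2 ≤ 2 * r ^ 2 := by nlinarith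
    have hJδ : (1 + r ^ 2) ^ δ ≤ 2 ^ δ * p := by
      refine (Real.rpow_le_rpow hJ hJ2 hδ0.le).trans_eq ?_
      rw [Real.mul_rpow (by norm_num) (by positivity), ← Real.rpow_natCast_mul hr0]; rfl
    have hJσ : (1 + r ^ 2) ^ σ ≤ 2 ^ σ * q := by
      refine (Real.rpow_le_rpow hJ hJ2 (by linarith)).trans_eq ?_
      rw [Real.mul_rpow (by norm_num) (by positivity), ← Real.rpow_natCast_mul hr0]; rfl
    have hE : Real.exp (2 * (t / (2 * 2 ^ δ)) * (1 + r ^ 2) ^ δ) ≤ Real.exp (p * t) := by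
      apply Real.exp_le_exp.mpr
      calc _ ≤ 2 * (t / (2 * 2 ^ δ)) * (2 ^ δ * p) := by gcongr
        _ = p * t := by field_simp
    have hee : Real.exp (p * t) * Real.exp (-(p * t / 2)) ^ 2 = 1 := by
      rw [← Real.exp_nat_mul, ← Real.exp_add]; simp; ring
    set e := Real.exp (-(p * t / 2)) with he
    have hepos : 0 < e := Real.exp_pos _
    have key : ∀ x : ℝ, 0 ≤ x → x ≤ 5 * e →
        Real.exp (2 * (t / (2 * 2 ^ δ)) * (1 + r ^ 2) ^ δ) * x ^ 2 ≤ 25 := by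
      intro x hx hx'
      calc _ ≤ Real.exp (p * t) * (5 * e) ^ 2 := by gcongr
        _ = 25 * (Real.exp (p * t) * e ^ 2) := by ring
        _ = 25 := by rw [hee]; ring
    have hC : 2 ^ σ * 25 ≤ Real.exp t * 2 ^ σ * (1 + 3 * t) ^ 2 + 2 ^ σ * 25 := by
      have : 0 ≤ Real.exp t * 2 ^ σ * (1 + 3 * t) ^ 2 := by positivity
      linarith
    refine ⟨?_, ?_, ?_⟩
    · exact (key _ (norm_nonneg _) (by linarith)).trans (by linarith)
    · refine le_trans ?_ hC
      have hk := key (√q * ‖K1hat σ δ t ξ‖) (by positivity) (by linarith)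
      rw [mul_pow, Real.sq_sqrt hq0] at hk
      calc _ ≤ Real.exp (2 * (t / (2 * 2 ^ δ)) * (1 + r ^ 2) ^ δ) *
            (2 ^ σ * q * ‖K1hat σ δ t ξ‖ ^ 2) := by gcongr
        _ = 2 ^ σ * (Real.exp (2 * (t / (2 * 2 ^ δ)) * (1 + r ^ 2) ^ δ) *
            (q * ‖K1hat σ δ t ξ‖ ^ 2)) := by ring
        _ ≤ _ := by gcongr
    · refine (key _ (norm_nonneg _) (hK3.trans ?_)).trans (by linarith)
      have := mul_le_mul_of_nonneg_right hpsq (norm_nonneg (K1hat σ δ t ξ))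
      linarith

lemma aux_sq (z w : ℂ) : ‖z + w‖ ^ 2 ≤ 2 * ‖z‖ ^ 2 + 2 * ‖w‖ ^ 2 := by
  have := norm_add_le z w
  nlinarith [norm_nonneg (z + w), sq_nonneg (‖z‖ - ‖w‖), norm_nonneg z, norm_nonneg w]

/-- Gevrey smoothing: for data `(u₀,u₁) ∈ H^σ × L²` (on the Fourier side: `v₀, v₁`),
for every `t > 0` there is `a > 0` such that
`exp(a⟨ξ⟩^{2δ})⟨ξ⟩^σ v(t,·) ∈ L²` and `exp(a⟨ξ⟩^{2δ}) w(t,·) ∈ L²`,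
i.e. `u(t,·) ∈ Γ^{1/(2δ),σ}` and `|D|^σ u(t,·), u_t(t,·) ∈ Γ^{1/(2δ),0}`. -/
theorem stmt_18 (n : ℕ) (hn : 1 ≤ n) (σ δ : ℝ) (hσ : 1 ≤ σ) (hδ : δ ∈ Set.Ioo 0 (σ / 2))
    (v₀ v₁ : EuclideanSpace ℝ (Fin n) → ℂ) (hv₀ : Measurable v₀) (hv₁ : Measurable v₁)
    (hv₀int : Integrable (fun ξ : EuclideanSpace ℝ (Fin n) =>
      (1 + ‖ξ‖ ^ 2) ^ σ * ‖v₀ ξ‖ ^ 2) volume)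
    (hv₁int : Integrable (fun ξ : EuclideanSpace ℝ (Fin n) => ‖v₁ ξ‖ ^ 2) volume) :
    ∀ t : ℝ, 0 < t → ∃ a : ℝ, 0 < a ∧
      Integrable (fun ξ : EuclideanSpace ℝ (Fin n) =>
        Real.exp (2 * a * (1 + ‖ξ‖ ^ 2) ^ δ) * (1 + ‖ξ‖ ^ 2) ^ σ *
          ‖K0hat σ δ t ξ * v₀ ξ + K1hat σ δ t ξ * v₁ ξ‖ ^ 2) volume ∧
      Integrable (fun ξ : EuclideanSpace ℝ (Fin n) =>
        Real.exp (2 * a * (1 + ‖ξ‖ ^ 2) ^ δ) *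
          ‖-((‖ξ‖ ^ (2 * σ) : ℝ) : ℂ) * K1hat σ δ t ξ * v₀ ξ +
            (K0hat σ δ t ξ - ((‖ξ‖ ^ (2 * δ) : ℝ) : ℂ) * K1hat σ δ t ξ) * v₁ ξ‖ ^ 2) volume := by
  intro t ht
  obtain ⟨a, ha, C, hC, hb⟩ := aux_bounds_s18 (n := n) σ δ hσ hδ.1 hδ.2 t ht
  have m1 : Measurable (fun ξ : EuclideanSpace ℝ (Fin n) => lam1 σ δ ξ) := by
    unfold lam1; fun_prop
  have m2 : Measurable (fun ξ : EuclideanSpace ℝ (Fin n) => lam2 σ δ ξ) := by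
    unfold lam2; fun_prop
  have mK0 : Measurable (fun ξ : EuclideanSpace ℝ (Fin n) => K0hat σ δ t ξ) := by
    unfold K0hat; fun_prop
  have mK1 : Measurable (fun ξ : EuclideanSpace ℝ (Fin n) => K1hat σ δ t ξ) := by
    unfold K1hat; fun_prop
  have hdom : Integrable (fun ξ : EuclideanSpace ℝ (Fin n) =>
      2 * C * ((1 + ‖ξ‖ ^ 2) ^ σ * ‖v₀ ξ‖ ^ 2) + 2 * C * ‖v₁ ξ‖ ^ 2) volume :=
    (hv₀int.const_mul _).add (hv₁int.const_mul _)
  refine ⟨a, ha, hdom.mono' ?_ ?_, hdom.mono' ?_ ?_⟩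
  · exact Measurable.aestronglyMeasurable (by fun_prop)
  · refine Filter.Eventually.of_forall fun ξ => ?_
    obtain ⟨b0, b1, b2⟩ := hb ξ
    rw [Real.norm_eq_abs, abs_of_nonneg (by positivity)]
    have h := aux_sq (K0hat σ δ t ξ * v₀ ξ) (K1hat σ δ t ξ * v₁ ξ)
    rw [norm_mul, norm_mul, mul_pow, mul_pow] at h
    set E := Real.exp (2 * a * (1 + ‖ξ‖ ^ 2) ^ δ)
    set J := (1 + ‖ξ‖ ^ 2) ^ σ with hJ
    have hE : 0 ≤ E := Real.exp_nonneg _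
    have hJ0 : 0 ≤ J := by positivity
    calc _ ≤ E * J * (2 * (‖K0hat σ δ t ξ‖ ^ 2 * ‖v₀ ξ‖ ^ 2) +
          2 * (‖K1hat σ δ t ξ‖ ^ 2 * ‖v₁ ξ‖ ^ 2)) := by gcongr
      _ = 2 * (E * ‖K0hat σ δ t ξ‖ ^ 2) * (J * ‖v₀ ξ‖ ^ 2) +
          2 * (E * (J * ‖K1hat σ δ t ξ‖ ^ 2)) * ‖v₁ ξ‖ ^ 2 := by ring
      _ ≤ _ := by gcongr
  · exact Measurable.aestronglyMeasurable (by fun_prop)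
  · refine Filter.Eventually.of_forall fun ξ => ?_
    obtain ⟨b0, b1, b2⟩ := hb ξ
    rw [Real.norm_eq_abs, abs_of_nonneg (by positivity)]
    have h := aux_sq (-((‖ξ‖ ^ (2 * σ) : ℝ) : ℂ) * K1hat σ δ t ξ * v₀ ξ)
      ((K0hat σ δ t ξ - ((‖ξ‖ ^ (2 * δ) : ℝ) : ℂ) * K1hat σ δ t ξ) * v₁ ξ)
    have hq0 : 0 ≤ ‖ξ‖ ^ (2 * σ) := by positivity
    rw [norm_mul, norm_mul, norm_mul, norm_neg, Complex.norm_real, Real.norm_eq_abs,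
      abs_of_nonneg hq0, mul_pow, mul_pow, mul_pow] at h
    have hqJ : ‖ξ‖ ^ (2 * σ) ≤ (1 + ‖ξ‖ ^ 2) ^ σ := by
      have : ‖ξ‖ ^ (2 * σ) = (‖ξ‖ ^ 2) ^ σ := by
        rw [← Real.rpow_natCast_mul (norm_nonneg ξ)]; rfl
      rw [this]
      exact Real.rpow_le_rpow (by positivity) (by linarith) (by linarith)
    set E := Real.exp (2 * a * (1 + ‖ξ‖ ^ 2) ^ δ)
    set J := (1 + ‖ξ‖ ^ 2) ^ σ with hJ
    set k := ‖K0hat σ δ t ξ - ((‖ξ‖ ^ (2 * δ) : ℝ) : ℂ) * K1hat σ δ t ξ‖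
    have hE : 0 ≤ E := Real.exp_nonneg _
    have hJ0 : 0 ≤ J := by positivity
    calc _ ≤ E * (2 * ((‖ξ‖ ^ (2 * σ)) ^ 2 * ‖K1hat σ δ t ξ‖ ^ 2 * ‖v₀ ξ‖ ^ 2) +
          2 * (k ^ 2 * ‖v₁ ξ‖ ^ 2)) := by gcongr
      _ ≤ E * (2 * (J ^ 2 * ‖K1hat σ δ t ξ‖ ^ 2 * ‖v₀ ξ‖ ^ 2) +
          2 * (k ^ 2 * ‖v₁ ξ‖ ^ 2)) := by gcongr
      _ = 2 * (E * (J * ‖K1hat σ δ t ξ‖ ^ 2)) * (J * ‖v₀ ξ‖ ^ 2) +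
          2 * (E * k ^ 2) * ‖v₁ ξ‖ ^ 2 := by ring
      _ ≤ _ := by gcongr
end
end
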